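/- arXiv:0805.3237 — 2 statements merged into one kernel-verified Lean document; each statement's English description precedes it below -/
import Mathlib

section
/- (Sufficiency: the canonical schedule meets all deadlines.) Consider n sporadic implicit-deadline tasks on m identical processors; task i has an integer period T_i ≥ 1, a worst-case execution time C_i > 0, utilization u_i = C_i/T_i with u_i ≤ γ_i(m), where γ_i is a work-limited parallelism profile on m processors. For task i let k_i = 0 if u_i ≤ γ_i(1) and otherwise k_i = max{1 ≤ j ≤ m : γ_i(j) < u_i}, and let λ_i = k_i + (u_i − γ_i(k_i))/(γ_i(k_i+1) − γ_i(k_i)). If λ_1 + ⋯ + λ_n ≤ m, then there exists a measurable schedule σ : ℝ → (Fin m → Option (Fin n)) that is 1-periodic (σ(s+1) = σ(s) for all s) such that: (a) for every task i and every time s, the number c_i(s) of processors assigned to i satisfies c_i(s) ∈ {k_i, k_i + 1}; and (b) for every task i and every real t, the integral over [t, t + T_i) of s ↦ γ_i(c_i(s)) is at least C_i (so every job of every task, whatever its arrival time, receives its full execution requirement before its deadline). -/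
open MeasureTheory

/-- Discrete measurable-space structure on `Option α`. -/
instance optionMeasurableSpace {α : Type*} [MeasurableSpace α] :
    MeasurableSpace (Option α) := ⊤

/-!
McNaughton's wrap-around rule: lay the demands `lam i` end to end on the half-line and cut `[0, m)`
into `m` unit pieces, one per processor; at time `s` processor `p` serves the task found at
the point `p + fract s`. A task occupying `[a, b)` then runs on
`⌈b - s⌉ - ⌈a - s⌉ = (b - a) + fract (s - b) - fract (s - a)` processors. For `b - a = k + θ` with
`0 ≤ θ ≤ 1` this integer can only be `k` or `k + 1`, and the two fractional parts have the same
integral over any window of integer length, so the mean rate over such a window is the affine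
interpolation `γ k + θ * (γ (k + 1) - γ k)`, which is the utilization by the choice of `θ`.
-/

section Fract

variable {R : Type*} [CommRing R] [LinearOrder R] [IsStrictOrderedRing R] [FloorRing R]

lemma card_natCast_add_fract_mem_Ico {m : ℕ} {a b : R} (ha : 0 ≤ a) (hab : a ≤ b) (hb : b ≤ m)
    (s : R) :
    (Finset.card {p : Fin m | (p : R) + Int.fract s ∈ Set.Ico a b} : ℤ) =
      ⌈b - s⌉ - ⌈a - s⌉ := by
  have fract_add_floor : Int.fract s + ⌊s⌋ = s := Int.fract_add_floor s
  rw [← Int.card_Ico_of_le _ _ (Int.ceil_le_ceil (sub_le_sub_right hab s)), Nat.cast_inj]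
  refine Finset.card_bij (fun p _ ↦ (p : ℤ) - ⌊s⌋) (fun p hp ↦ ?_)
    (fun p _ q _ hpq ↦ Fin.ext (by lia)) (fun z hz ↦ ?_)
  · simp only [Finset.mem_filter_univ, Set.mem_Ico] at hp
    rw [Finset.mem_Ico, Int.ceil_le, Int.lt_ceil]
    push_cast
    constructor <;> linarith
  · rw [Finset.mem_Ico, Int.ceil_le, Int.lt_ceil] at hz
    have neg_one_lt : -1 < z + ⌊s⌋ := by
      have : (-1 : R) < z + ⌊s⌋ := by linarith [Int.fract_lt_one s]
      exact_mod_cast this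
    have lt_m : z + ⌊s⌋ < m := by
      have : (z + ⌊s⌋ : R) < m := by linarith [Int.fract_nonneg s]
      exact_mod_cast this
    obtain ⟨p, hp⟩ : ∃ p : ℕ, (p : ℤ) = z + ⌊s⌋ := ⟨_, Int.toNat_of_nonneg (by lia)⟩
    have hp_cast : (p : R) = z + ⌊s⌋ := by exact_mod_cast hp
    refine ⟨⟨p, by lia⟩, ?_, by simp [hp]⟩
    simp only [Finset.mem_filter_univ, Set.mem_Ico]
    constructor <;> linarith

lemma ceil_sub_eq_sub_add_fract (y s : R) : (⌈y - s⌉ : R) = y - s + Int.fract (s - y) := by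
  rw [← neg_sub s y, Int.ceil_neg, Int.fract]
  push_cast
  ring

lemma intervalIntegrable_fract_sub (c t₁ t₂ : ℝ) :
    IntervalIntegrable (fun s ↦ Int.fract (s - c)) volume t₁ t₂ := by
  refine (intervalIntegrable_const (c := (1 : ℝ))).mono_fun
    (measurable_id.sub_const c).fract.aestronglyMeasurable (.of_forall fun s ↦ ?_)
  simpa [abs_of_nonneg] using (Int.fract_lt_one (s - c)).le

lemma integral_comp_sub_of_periodic {E : Type*} [NormedAddCommGroup E] [NormedSpace ℝ E]
    {g : ℝ → E} {T : ℝ} (hg : Function.Periodic g T) (t c : ℝ) :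
    ∫ s in t..t + T, g (s - c) = ∫ s in t..t + T, g s := by
  rw [intervalIntegral.integral_comp_sub_right g c, add_sub_right_comm,
    hg.intervalIntegral_add_eq (t - c) t]

lemma integral_fract_sub_sub_fract_sub (a b t : ℝ) (T : ℕ) :
    ∫ s in t..t + T, (Int.fract (s - b) - Int.fract (s - a)) = 0 := by
  have fract_periodic : Function.Periodic (Int.fract : ℝ → ℝ) T := fun s ↦
    Int.fract_add_natCast s T
  rw [intervalIntegral.integral_sub (intervalIntegrable_fract_sub b _ _)
      (intervalIntegrable_fract_sub a _ _),
    integral_comp_sub_of_periodic fract_periodic, integral_comp_sub_of_periodic fract_periodic,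
    sub_self]

end Fract

section Layout

variable {ι : Type*} [LinearOrder ι] [LocallyFiniteOrderBot ι] {lam : ι → ℝ}

/-- The part of the half-line occupied by task `i` when intervals of lengths `lam j` are laid end to
end from `0`, in the order of `ι`. -/
def taskSegment (lam : ι → ℝ) (i : ι) : Set ℝ :=
  Set.Ico (∑ j ∈ Finset.Iio i, lam j) (∑ j ∈ Finset.Iic i, lam j)

lemma pairwise_disjoint_taskSegment (hlam : ∀ i, 0 ≤ lam i) :
    Pairwise (Function.onFun Disjoint (taskSegment lam)) := by
  refine (pairwise_disjoint_on _).2 fun i j hij ↦ Set.Ico_disjoint_Ico.2 ?_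
  have end_le_start : ∑ l ∈ Finset.Iic i, lam l ≤ ∑ l ∈ Finset.Iio j, lam l :=
    Finset.sum_le_sum_of_subset_of_nonneg
      (fun l hl ↦ Finset.mem_Iio.2 ((Finset.mem_Iic.1 hl).trans_lt hij)) fun l _ _ ↦ hlam l
  exact (min_le_left _ _).trans (end_le_start.trans (le_max_right _ _))

open Classical in
/-- The task whose segment contains the point `x`, or `none` if there is none. The choice is
immaterial for nonnegative `lam`, since the segments are then disjoint. -/
noncomputable def taskAt (lam : ι → ℝ) (x : ℝ) : Option ι :=
  if h : ∃ i, x ∈ taskSegment lam i then some h.choose else none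

lemma taskAt_eq_some_iff (hlam : ∀ i, 0 ≤ lam i) {x : ℝ} {i : ι} :
    taskAt lam x = some i ↔ x ∈ taskSegment lam i := by
  unfold taskAt
  split_ifs with h
  · rw [Option.some_inj]
    refine ⟨fun hi ↦ hi ▸ h.choose_spec, fun hi ↦ ?_⟩
    exact (pairwise_disjoint_taskSegment hlam).eq
      (Set.not_disjoint_iff.2 ⟨x, h.choose_spec, hi⟩)
  · exact iff_of_false (by simp) (not_exists.1 h i)

lemma measurable_taskAt [Countable ι] [MeasurableSpace ι] (hlam : ∀ i, 0 ≤ lam i) :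
    Measurable (taskAt lam) := by
  refine measurable_to_countable' fun o ↦ ?_
  cases o with
  | some i =>
    have preimage_some : taskAt lam ⁻¹' {some i} = taskSegment lam i :=
      Set.ext fun _ ↦ taskAt_eq_some_iff hlam
    rw [preimage_some]
    exact measurableSet_Ico
  | none =>
    have preimage_none : taskAt lam ⁻¹' {none} = (⋃ i, taskSegment lam i)ᶜ := by
      ext x
      simp [Option.eq_none_iff_forall_ne_some, taskAt_eq_some_iff hlam]
    rw [preimage_none]
    exact (MeasurableSet.iUnion fun _ ↦ measurableSet_Ico).compl

end Layout

section Schedule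

variable {ι : Type*} [LinearOrder ι] [LocallyFiniteOrderBot ι] {lam : ι → ℝ} {m : ℕ}

/-- McNaughton's wrap-around schedule for the demands `lam`: during each unit of time, processor `p`
sweeps the interval `[p, p + 1)` of the end-to-end layout of the tasks. -/
noncomputable def wrapAroundSchedule (lam : ι → ℝ) (m : ℕ) (s : ℝ) (p : Fin m) : Option ι :=
  taskAt lam (p + Int.fract s)

/-- The number of processors that the assignment `A` gives to task `i`, written `c_i(s)` when `A` is
the state of a schedule at time `s`. -/
def processorCount {ι : Type*} [DecidableEq ι] {m : ℕ} (A : Fin m → Option ι) (i : ι) : ℕ :=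
  Finset.card {p | A p = some i}

lemma wrapAroundSchedule_add_one (lam : ι → ℝ) (m : ℕ) (s : ℝ) :
    wrapAroundSchedule lam m (s + 1) = wrapAroundSchedule lam m s := by
  funext p
  simp only [wrapAroundSchedule, Int.fract_add_one]

lemma measurable_wrapAroundSchedule [Countable ι] [MeasurableSpace ι] (hlam : ∀ i, 0 ≤ lam i)
    (m : ℕ) : Measurable (wrapAroundSchedule lam m) :=
  measurable_pi_iff.2 fun _ ↦ (measurable_taskAt hlam).comp (measurable_fract.const_add _)

variable [Fintype ι]

lemma processorCount_wrapAroundSchedule (hlam : ∀ i, 0 ≤ lam i) (hsum : ∑ i, lam i ≤ m) (i : ι)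
    (s : ℝ) :
    (processorCount (wrapAroundSchedule lam m s) i : ℝ) =
      lam i + (Int.fract (s - ∑ j ∈ Finset.Iic i, lam j) -
        Int.fract (s - ∑ j ∈ Finset.Iio i, lam j)) := by
  have start_nonneg : 0 ≤ ∑ j ∈ Finset.Iio i, lam j := Finset.sum_nonneg fun j _ ↦ hlam j
  have start_add : ∑ j ∈ Finset.Iio i, lam j + lam i = ∑ j ∈ Finset.Iic i, lam j :=
    Finset.sum_Iio_add_eq_sum_Iic i
  have end_le : ∑ j ∈ Finset.Iic i, lam j ≤ m :=
    (Finset.sum_le_univ_sum_of_nonneg hlam).trans hsum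
  have count_eq := card_natCast_add_fract_mem_Ico start_nonneg
    (start_add ▸ le_add_of_nonneg_right (hlam i)) end_le s
  have count_eq_real := congrArg (Int.cast (R := ℝ)) count_eq
  simp only [Int.cast_natCast, Int.cast_sub, ceil_sub_eq_sub_add_fract] at count_eq_real
  simp only [processorCount, wrapAroundSchedule, taskAt_eq_some_iff hlam, taskSegment]
  linarith

variable {i : ι} {k : ℕ} {θ : ℝ}

lemma processorCount_wrapAroundSchedule_eq_or_eq_succ (hlam : ∀ i, 0 ≤ lam i)
    (hsum : ∑ i, lam i ≤ m) (hi : lam i = k + θ) (hθ : θ ∈ Set.Icc (0 : ℝ) 1) (s : ℝ) :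
    processorCount (wrapAroundSchedule lam m s) i = k ∨
      processorCount (wrapAroundSchedule lam m s) i = k + 1 := by
  have count_eq := processorCount_wrapAroundSchedule hlam hsum i s
  generalize processorCount (wrapAroundSchedule lam m s) i = c at count_eq ⊢
  generalize s - ∑ j ∈ Finset.Iic i, lam j = x, s - ∑ j ∈ Finset.Iio i, lam j = y at count_eq
  have k_lt : (k : ℝ) < c + 1 := by linarith [hθ.1, Int.fract_nonneg x, Int.fract_lt_one y]
  have lt_k : (c : ℝ) < k + 2 := by linarith [hθ.2, Int.fract_lt_one x, Int.fract_nonneg y]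
  norm_cast at k_lt lt_k
  lia

lemma setIntegral_comp_processorCount_wrapAroundSchedule (hlam : ∀ i, 0 ≤ lam i)
    (hsum : ∑ i, lam i ≤ m) (hi : lam i = k + θ) (hθ : θ ∈ Set.Icc (0 : ℝ) 1) (γ : ℕ → ℝ) (t : ℝ)
    (T : ℕ) :
    ∫ s in Set.Ico t (t + T), γ (processorCount (wrapAroundSchedule lam m s) i) =
      T * (γ k + θ * (γ (k + 1) - γ k)) := by
  set a := ∑ j ∈ Finset.Iio i, lam j
  set b := ∑ j ∈ Finset.Iic i, lam j
  have rate_eq (s : ℝ) : γ (processorCount (wrapAroundSchedule lam m s) i) =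
      γ k + θ * (γ (k + 1) - γ k) +
        (γ (k + 1) - γ k) * (Int.fract (s - b) - Int.fract (s - a)) := by
    have count_eq := processorCount_wrapAroundSchedule hlam hsum i s
    have fract_diff : Int.fract (s - b) - Int.fract (s - a) =
        processorCount (wrapAroundSchedule lam m s) i - k - θ := by linarith
    rw [fract_diff]
    rcases processorCount_wrapAroundSchedule_eq_or_eq_succ hlam hsum hi hθ s with h | h <;>
      (rw [h]; push_cast; ring)
  have fract_diff_integrable :=
    (intervalIntegrable_fract_sub b t (t + T)).sub (intervalIntegrable_fract_sub a t (t + T))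
  simp_rw [rate_eq]
  rw [integral_Ico_eq_integral_Ioc,
    ← intervalIntegral.integral_of_le (le_add_of_nonneg_right T.cast_nonneg),
    intervalIntegral.integral_add intervalIntegrable_const (fract_diff_integrable.const_mul _),
    intervalIntegral.integral_const_mul, integral_fract_sub_sub_fract_sub,
    intervalIntegral.integral_const, add_sub_cancel_left, smul_eq_mul, mul_zero, add_zero]

end Schedule

section Level

variable {α : Type*} [LinearOrder α] {γ : ℕ → α} {m : ℕ} {u : α}

/-- The paper's `k`: the base number of processors of a task with profile `γ` and utilization `u`
on `m` processors, to which its schedule adds at most one more at any time. -/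
def parallelLevel (γ : ℕ → α) (m : ℕ) (u : α) : ℕ :=
  if u ≤ γ 1 then 0 else Nat.findGreatest (fun j ↦ γ j < u) m

lemma apply_parallelLevel_lt (h0 : γ 0 < u) (hum : u ≤ γ m) : γ (parallelLevel γ m u) < u := by
  have m_pos : 1 ≤ m := Nat.one_le_iff_ne_zero.2 fun hm ↦ (hm ▸ hum).not_gt h0
  unfold parallelLevel
  split_ifs with h
  · exact h0
  · exact Nat.findGreatest_spec (P := fun j ↦ γ j < u) m_pos (not_le.1 h)

lemma le_apply_parallelLevel_succ (h0 : γ 0 < u) (hum : u ≤ γ m) :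
    u ≤ γ (parallelLevel γ m u + 1) := by
  have level_ne : parallelLevel γ m u ≠ m := fun h ↦
    (h ▸ apply_parallelLevel_lt h0 hum).not_ge hum
  unfold parallelLevel at level_ne ⊢
  split_ifs at level_ne ⊢ with h
  · exact h
  · exact not_lt.1 (Nat.findGreatest_is_greatest (P := fun j ↦ γ j < u) (Nat.lt_succ_self _)
      ((Nat.findGreatest_le m).lt_of_ne level_ne))

end Level

theorem stmt6_general (n m : ℕ)
    (γ : Fin n → ℕ → ℝ)
    (h0 : ∀ i, γ i 0 = 0)
    (T : Fin n → ℕ) (hT : ∀ i, 1 ≤ T i)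
    (C : Fin n → ℝ) (hC : ∀ i, 0 < C i)
    (u : Fin n → ℝ) (hu : ∀ i, u i = C i / (T i : ℝ))
    (hum : ∀ i, u i ≤ γ i m)
    (k : Fin n → ℕ)
    (hk : ∀ i, k i = if u i ≤ γ i 1 then 0
      else Nat.findGreatest (fun j => γ i j < u i) m)
    (lam : Fin n → ℝ)
    (hlam : ∀ i, lam i =
      (k i : ℝ) + (u i - γ i (k i)) / (γ i (k i + 1) - γ i (k i)))
    (hfeas : ∑ i, lam i ≤ (m : ℝ)) :
    ∃ σ : ℝ → Fin m → Option (Fin n),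
      Measurable σ ∧
      (∀ s : ℝ, σ (s + 1) = σ s) ∧
      (∀ i, ∀ s : ℝ,
        (Finset.univ.filter (fun p => σ s p = some i)).card = k i ∨
        (Finset.univ.filter (fun p => σ s p = some i)).card = k i + 1) ∧
      (∀ i, ∀ t : ℝ, ∫ s in Set.Ico t (t + (T i : ℝ)),
        γ i ((Finset.univ.filter (fun p => σ s p = some i)).card) = C i) := by
  have T_pos i : (0 : ℝ) < T i := Nat.cast_pos.2 (hT i)
  have rate_zero_lt i : γ i 0 < u i := by rw [h0, hu]; exact div_pos (hC i) (T_pos i)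
  have rate_lt i : γ i (k i) < u i := hk i ▸ apply_parallelLevel_lt (rate_zero_lt i) (hum i)
  have le_rate i : u i ≤ γ i (k i + 1) :=
    hk i ▸ le_apply_parallelLevel_succ (rate_zero_lt i) (hum i)
  have gap_pos i : 0 < γ i (k i + 1) - γ i (k i) := sub_pos.2 ((rate_lt i).trans_le (le_rate i))
  have frac_mem i : (u i - γ i (k i)) / (γ i (k i + 1) - γ i (k i)) ∈ Set.Icc (0 : ℝ) 1 :=
    ⟨div_nonneg (sub_nonneg.2 (rate_lt i).le) (gap_pos i).le,
      (div_le_one (gap_pos i)).2 (sub_le_sub_right (le_rate i) _)⟩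
  have lam_nonneg i : 0 ≤ lam i := hlam i ▸ add_nonneg (k i).cast_nonneg (frac_mem i).1
  refine ⟨wrapAroundSchedule lam m, measurable_wrapAroundSchedule lam_nonneg m,
    wrapAroundSchedule_add_one lam m, fun i ↦
      processorCount_wrapAroundSchedule_eq_or_eq_succ lam_nonneg hfeas (hlam i) (frac_mem i),
    fun i t ↦ ?_⟩
  calc ∫ s in Set.Ico t (t + T i), γ i (processorCount (wrapAroundSchedule lam m s) i)
    _ = T i * u i := by
      rw [setIntegral_comp_processorCount_wrapAroundSchedule lam_nonneg hfeas (hlam i) (frac_mem i),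
        div_mul_cancel₀ _ (gap_pos i).ne', add_sub_cancel]
    _ = C i := by rw [hu, mul_div_cancel₀ _ (T_pos i).ne']

/-- Sufficiency: the canonical schedule meets all deadlines:
for sporadic implicit-deadline tasks with work-limited parallelism profiles,
if `∑ λᵢ ≤ m` then there is a 1-periodic measurable schedule in which each task
`i` always uses `kᵢ` or `kᵢ + 1` processors and every window `[t, t + Tᵢ)`
provides task `i` at least `Cᵢ` units of execution. -/
theorem stmt6 (n m : ℕ) (hn : 1 ≤ n) (hm : 1 ≤ m)
    (γ : Fin n → ℕ → ℝ)
    (h0 : ∀ i, γ i 0 = 0)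
    (hmono : ∀ i, ∀ j : ℕ, j < m → γ i j < γ i (j + 1))
    (hratio : ∀ i, ∀ j j' : ℕ, 1 ≤ j → j < j' → j' ≤ m →
      γ i j' / γ i j < (j' : ℝ) / (j : ℝ))
    (hconv : ∀ i, ∀ j j' : ℕ, 1 ≤ j → j < j' → j' < m →
      γ i (j' + 1) - γ i j' ≤ γ i (j + 1) - γ i j)
    (T : Fin n → ℕ) (hT : ∀ i, 1 ≤ T i)
    (C : Fin n → ℝ) (hC : ∀ i, 0 < C i)
    (u : Fin n → ℝ) (hu : ∀ i, u i = C i / (T i : ℝ))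
    (hum : ∀ i, u i ≤ γ i m)
    (k : Fin n → ℕ)
    (hk : ∀ i, k i = if u i ≤ γ i 1 then 0
      else Nat.findGreatest (fun j => γ i j < u i) m)
    (lam : Fin n → ℝ)
    (hlam : ∀ i, lam i =
      (k i : ℝ) + (u i - γ i (k i)) / (γ i (k i + 1) - γ i (k i)))
    (hfeas : ∑ i, lam i ≤ (m : ℝ)) :
    ∃ σ : ℝ → Fin m → Option (Fin n),
      Measurable σ ∧
      (∀ s : ℝ, σ (s + 1) = σ s) ∧
      (∀ i, ∀ s : ℝ,
        (Finset.univ.filter (fun p => σ s p = some i)).card = k i ∨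
        (Finset.univ.filter (fun p => σ s p = some i)).card = k i + 1) ∧
      (∀ i, ∀ t : ℝ, C i ≤ ∫ s in Set.Ico t (t + (T i : ℝ)),
        γ i ((Finset.univ.filter (fun p => σ s p = some i)).card)) := by
  obtain ⟨σ, hmeas, hper, hcount, hint⟩ :=
    stmt6_general n m γ h0 T hT C hC u hu hum k hk lam hlam hfeas
  exact ⟨σ, hmeas, hper, hcount, fun i t ↦ (hint i t).ge⟩
end

section
/- (Wrap-around construction.) Let m ≥ 1 and n ≥ 1 and let λ_1, …, λ_n ≥ 0 be real numbers with λ_1 + ⋯ + λ_n ≤ m. Then there exists a 1-periodic measurable function σ : ℝ → (Fin m → Option (Fin n)) such that for every i ∈ {1,…,n}: (a) for every time s, the number c_i(s) of processors p with σ(s)(p) = some i satisfies ⌊λ_i⌋ ≤ c_i(s) ≤ ⌊λ_i⌋ + 1; and (b) the Lebesgue measure of {s ∈ [0,1) : c_i(s) = ⌊λ_i⌋ + 1} equals λ_i − ⌊λ_i⌋. (In particular, over every unit-length interval, task i receives total processor time exactly λ_i.) -/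
open MeasureTheory

/-!
Lay the tasks end to end on `[0, m)`, task `i` taking an interval `[a, a + λᵢ)`, and cut `[0, m)`
into `m` unit pieces, one per processor: at time `s`, processor `p` runs the task found at position
`p + fract s`. The number of integer translates of `s` lying in `[a, a + λᵢ)` depends only on the
distance `u = fract (s - a)` from `a` to the first translate at or after it: it is `⌈λᵢ - u⌉`, that
is, `⌊λᵢ⌋ + 1` if `u < fract λᵢ` and `⌊λᵢ⌋` otherwise. As `u` is uniformly distributed over a
period, the first case takes up the fraction `fract λᵢ` of the time.
-/

section Count

variable {R : Type*} [Ring R] [LinearOrder R] [FloorRing R]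

theorem card_fin_filter_mem_Ico {m : ℕ} {x y : R} (hx : -1 < x) (hy : y ≤ m) :
    (Finset.univ.filter fun p : Fin m => (p : R) ∈ Set.Ico x y).card = (⌈y⌉ - ⌈x⌉).toNat := by
  have ceil_nonneg : 0 ≤ ⌈x⌉ := Int.ceil_nonneg_of_neg_one_lt hx
  have ceil_le : ⌈y⌉ ≤ m := Int.ceil_le.2 (by simpa using hy)
  have mem_Ico_iff (k : ℕ) : (k : R) ∈ Set.Ico x y ↔ (k : ℤ) ∈ Set.Ico ⌈x⌉ ⌈y⌉ := by
    rw [← Int.preimage_Ico, Set.mem_preimage, Int.cast_natCast]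
  rw [← Int.card_Ico]
  refine Finset.card_bij (fun p _ => (p : ℤ)) ?_ ?_ ?_
  · simp [mem_Ico_iff]
  · simp [Fin.ext_iff]
  · intro k hk
    rw [Finset.mem_Ico] at hk
    lift k to ℕ using by lia
    exact ⟨⟨k, by lia⟩, by simpa [mem_Ico_iff] using hk, rfl⟩

variable [IsStrictOrderedRing R]

theorem ceil_add_sub_sub_ceil_sub (a l s : R) :
    ⌈a + l - s⌉ - ⌈a - s⌉ = ⌈l - Int.fract (s - a)⌉ := by
  have shift : l - Int.fract (s - a) = a + l - s + ⌊s - a⌋ := by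
    rw [← Int.self_sub_floor]
    abel
  rw [shift, Int.ceil_add_intCast, ← neg_sub s a, Int.ceil_neg, sub_neg_eq_add]

theorem natCeil_sub_fract {l : R} (hl : 0 ≤ l) (u : R) :
    ⌈l - Int.fract u⌉₊ = ⌊l⌋₊ + if Int.fract u < Int.fract l then 1 else 0 := by
  have split_floor : l - Int.fract u = Int.fract l - Int.fract u + (⌊l⌋₊ : ℤ) := by
    rw [Int.natCast_floor_eq_floor hl, sub_add_eq_add_sub, Int.fract_add_floor]
  have ceil_fract_sub :
      ⌈Int.fract l - Int.fract u⌉ = if Int.fract u < Int.fract l then 1 else 0 := by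
    split_ifs with h
    · have le_one : Int.fract l - Int.fract u ≤ 1 :=
        (sub_le_self _ (Int.fract_nonneg u)).trans (Int.fract_lt_one l).le
      exact Int.ceil_eq_iff.2 ⟨by simpa using h, by simpa using le_one⟩
    · exact Int.ceil_eq_zero_iff.2
        ⟨neg_lt_sub_iff_lt_add.2 (lt_add_of_lt_of_nonneg (Int.fract_lt_one u) (Int.fract_nonneg l)),
          sub_nonpos.2 (not_lt.1 h)⟩
  rw [← Int.ceil_toNat, split_floor, Int.ceil_add_intCast, ceil_fract_sub]
  split_ifs <;> lia

theorem card_fin_filter_add_fract_mem_Ico {m : ℕ} {a l : R} (ha : 0 ≤ a) (hl : 0 ≤ l)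
    (hm : a + l ≤ m) (s : R) :
    (Finset.univ.filter fun p : Fin m => (p : R) + Int.fract s ∈ Set.Ico a (a + l)).card =
      ⌊l⌋₊ + if Int.fract (s - a) < Int.fract l then 1 else 0 := by
  have neg_one_lt : -1 < a - Int.fract s :=
    neg_lt_sub_iff_lt_add.2 (lt_add_of_lt_of_nonneg (Int.fract_lt_one s) ha)
  have le_m : a + l - Int.fract s ≤ m := (sub_le_self _ (Int.fract_nonneg s)).trans hm
  have fract_fract_sub : Int.fract (Int.fract s - a) = Int.fract (s - a) := by
    rw [← Int.self_sub_floor s, sub_right_comm, Int.fract_sub_intCast]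
  simp only [Set.add_mem_Ico_iff_left]
  rw [card_fin_filter_mem_Ico neg_one_lt le_m, ceil_add_sub_sub_ceil_sub,
    fract_fract_sub, Int.ceil_toNat, natCeil_sub_fract hl]

end Count

section Volume

theorem volume_inter_Ico_eq_of_periodic {T : ℝ} (hT : 0 < T) {A : Set ℝ} (hA : MeasurableSet A)
    (hper : Function.Periodic (· ∈ A) T) (t u : ℝ) :
    volume (A ∩ Set.Ico t (t + T)) = volume (A ∩ Set.Ico u (u + T)) := by
  have Ico_eq_Ioc (v : ℝ) : volume (A ∩ Set.Ico v (v + T)) = volume (A ∩ Set.Ioc v (v + T)) :=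
    measure_congr ((Filter.EventuallyEq.refl _ _).inter Ico_ae_eq_Ioc)
  rw [Ico_eq_Ioc, Ico_eq_Ioc]
  exact (isAddFundamentalDomain_Ioc hT t).measure_set_eq (isAddFundamentalDomain_Ioc hT u) hA
    fun g => Set.ext fun x => (hper.map_vadd_zmultiples g x).to_iff

theorem volume_fract_sub_lt_inter_Ico {r : ℝ} (hr : r ≤ 1) (a t : ℝ) :
    volume ({s | Int.fract (s - a) < r} ∩ Set.Ico t (t + 1)) = ENNReal.ofReal r := by
  have measurableSet_fract_lt : MeasurableSet {s | Int.fract (s - a) < r} :=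
    measurableSet_lt (measurable_id.sub_const a).fract measurable_const
  have periodic : Function.Periodic (· ∈ {s | Int.fract (s - a) < r}) 1 := fun s => by
    simp [add_sub_right_comm]
  have inter_eq : {s | Int.fract (s - a) < r} ∩ Set.Ico a (a + 1) = Set.Ico a (a + r) := by
    ext s
    have fract_eq (h : s ∈ Set.Ico a (a + 1)) : Int.fract (s - a) = s - a :=
      Int.fract_eq_self.2 ⟨by linarith [h.1], by linarith [h.2]⟩
    constructor
    · rintro ⟨hlt, hs⟩
      rw [Set.mem_ofPred_eq, fract_eq hs] at hlt
      exact ⟨hs.1, by linarith⟩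
    · rintro ⟨has, hsr⟩
      have hs : s ∈ Set.Ico a (a + 1) := ⟨has, by linarith⟩
      exact ⟨by rw [Set.mem_ofPred_eq, fract_eq hs]; linarith, hs⟩
  rw [volume_inter_Ico_eq_of_periodic one_pos measurableSet_fract_lt periodic t a, inter_eq,
    Real.volume_Ico, add_sub_cancel_left]

end Volume

section BlockIndex

variable {α ι : Type*} {B : ι → Set α}

open scoped Classical in
/-- The index of the block containing `x`, for a family `B` of pairwise disjoint blocks; `none` if
`x` lies in no block. If the blocks overlap, an arbitrary one containing `x` is chosen. -/
noncomputable def blockIndex (B : ι → Set α) (x : α) : Option ι :=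
  if h : ∃ i, x ∈ B i then some h.choose else none

theorem blockIndex_eq_none_iff {x : α} : blockIndex B x = none ↔ ∀ i, x ∉ B i := by
  simp [blockIndex]

theorem blockIndex_eq_some_iff (hB : Pairwise (Function.onFun Disjoint B)) {x : α} {i : ι} :
    blockIndex B x = some i ↔ x ∈ B i := by
  by_cases h : ∃ j, x ∈ B j
  · rw [blockIndex, dif_pos h, Option.some_inj]
    exact ⟨fun hi => hi ▸ h.choose_spec,
      fun hi => hB.eq (Set.not_disjoint_iff.2 ⟨x, h.choose_spec, hi⟩)⟩
  · rw [blockIndex, dif_neg h]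
    exact iff_of_false nofun fun hi => h ⟨i, hi⟩

theorem measurable_blockIndex [MeasurableSpace α] [MeasurableSpace ι] [Countable ι]
    (hB : Pairwise (Function.onFun Disjoint B)) (hmeas : ∀ i, MeasurableSet (B i)) :
    Measurable (blockIndex B) := by
  refine measurable_to_countable' fun
    | none => ?_
    | some i => ?_
  · have preimage_none : blockIndex B ⁻¹' {none} = (⋃ i, B i)ᶜ := by
      ext x
      simp [blockIndex_eq_none_iff]
    exact preimage_none ▸ (MeasurableSet.iUnion hmeas).compl
  · have preimage_some : blockIndex B ⁻¹' {some i} = B i := by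
      ext x
      simp [blockIndex_eq_some_iff hB]
    exact preimage_some ▸ hmeas i

end BlockIndex

section WrapAround

variable {ι : Type*} [LinearOrder ι] [LocallyFiniteOrderBot ι] {w : ι → ℝ}

/-- The left endpoint of the block of task `i` when blocks of lengths `w` are laid end to end from
`0` in increasing order of their indices. -/
def blockStart (w : ι → ℝ) (i : ι) : ℝ :=
  ∑ j ∈ Finset.Iio i, w j

/-- The interval of length `w i` occupied by task `i` when the tasks are laid end to end. -/
def taskBlock (w : ι → ℝ) (i : ι) : Set ℝ :=
  Set.Ico (blockStart w i) (blockStart w i + w i)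

/-- The wrap-around schedule on `m` processors for tasks of rates `w`: processor `p` runs through
the part of the task line in `[p, p + 1)` during each unit of time, starting at integer times.
Processors are filled from the lowest index up. -/
noncomputable def wrapAround (w : ι → ℝ) (m : ℕ) (s : ℝ) (p : Fin m) : Option ι :=
  blockIndex (taskBlock w) (p + Int.fract s)

theorem blockStart_nonneg (hw : ∀ i, 0 ≤ w i) (i : ι) : 0 ≤ blockStart w i :=
  Finset.sum_nonneg fun j _ => hw j

theorem blockStart_add_le_blockStart (hw : ∀ i, 0 ≤ w i) {i j : ι} (hij : i < j) :
    blockStart w i + w i ≤ blockStart w j := by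
  rw [blockStart, Finset.sum_Iio_add_eq_sum_Iic]
  exact Finset.sum_le_sum_of_subset_of_nonneg
    (fun k hk => Finset.mem_Iio.2 ((Finset.mem_Iic.1 hk).trans_lt hij)) fun k _ _ => hw k

theorem blockStart_add_le_sum [Fintype ι] (hw : ∀ i, 0 ≤ w i) (i : ι) :
    blockStart w i + w i ≤ ∑ j, w j := by
  rw [blockStart, Finset.sum_Iio_add_eq_sum_Iic]
  exact Finset.sum_le_univ_sum_of_nonneg hw

theorem pairwise_disjoint_taskBlock (hw : ∀ i, 0 ≤ w i) :
    Pairwise (Function.onFun Disjoint (taskBlock w)) :=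
  (pairwise_disjoint_on _).2 fun _ _ hij =>
    Set.Ico_disjoint_Ico.2 <|
      (min_le_left _ _).trans ((blockStart_add_le_blockStart hw hij).trans (le_max_right _ _))

theorem measurable_wrapAround [MeasurableSpace ι] [Countable ι] (hw : ∀ i, 0 ≤ w i) (m : ℕ) :
    Measurable (wrapAround w m) :=
  measurable_pi_lambda _ fun _ =>
    (measurable_blockIndex (pairwise_disjoint_taskBlock hw) fun _ => measurableSet_Ico).comp
      (measurable_fract.const_add _)

theorem periodic_wrapAround (w : ι → ℝ) (m : ℕ) : Function.Periodic (wrapAround w m) 1 := by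
  intro s
  funext p
  rw [wrapAround, wrapAround, Int.fract_add_one]

theorem card_filter_wrapAround_eq_some [Fintype ι] {m : ℕ} (hw : ∀ i, 0 ≤ w i)
    (hsum : ∑ i, w i ≤ m) (i : ι) (s : ℝ) :
    (Finset.univ.filter fun p : Fin m => wrapAround w m s p = some i).card =
      ⌊w i⌋₊ + if Int.fract (s - blockStart w i) < Int.fract (w i) then 1 else 0 := by
  simp only [wrapAround, blockIndex_eq_some_iff (pairwise_disjoint_taskBlock hw), taskBlock]
  exact card_fin_filter_add_fract_mem_Ico (blockStart_nonneg hw i) (hw i)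
    ((blockStart_add_le_sum hw i).trans hsum) s

end WrapAround

/-- Wrap-around construction: given nonnegative reals
`λ₁, …, λₙ` with `∑ λᵢ ≤ m`, there is a 1-periodic measurable schedule on `m`
processors in which task `i` always occupies `⌊λᵢ⌋` or `⌊λᵢ⌋ + 1` processors,
and occupies `⌊λᵢ⌋ + 1` processors during a fraction `λᵢ − ⌊λᵢ⌋` of `[0, 1)`. -/
theorem stmt8 (n m : ℕ) (hn : 1 ≤ n) (hm : 1 ≤ m)
    (lam : Fin n → ℝ) (hlam : ∀ i, 0 ≤ lam i)
    (hsum : ∑ i, lam i ≤ (m : ℝ)) :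
    ∃ σ : ℝ → Fin m → Option (Fin n),
      Measurable σ ∧
      (∀ s : ℝ, σ (s + 1) = σ s) ∧
      ∀ i,
        (∀ s : ℝ,
          ⌊lam i⌋₊ ≤ (Finset.univ.filter (fun p => σ s p = some i)).card ∧
          (Finset.univ.filter (fun p => σ s p = some i)).card ≤ ⌊lam i⌋₊ + 1) ∧
        volume {s : ℝ | s ∈ Set.Ico (0 : ℝ) 1 ∧
            (Finset.univ.filter (fun p => σ s p = some i)).card = ⌊lam i⌋₊ + 1}
          = ENNReal.ofReal (lam i - (⌊lam i⌋₊ : ℝ)) := by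
  refine ⟨wrapAround lam m, measurable_wrapAround hlam m, periodic_wrapAround lam m, fun i => ?_⟩
  have card_eq := card_filter_wrapAround_eq_some hlam hsum i
  refine ⟨fun s => ?_, ?_⟩
  · rw [card_eq]
    split_ifs <;> simp
  · have extra_iff (s : ℝ) :
        (Finset.univ.filter fun p => wrapAround lam m s p = some i).card = ⌊lam i⌋₊ + 1 ↔
          Int.fract (s - blockStart lam i) < Int.fract (lam i) := by
      rw [card_eq]
      split_ifs with h <;> simp [h]
    have volume_extra := volume_fract_sub_lt_inter_Ico (Int.fract_lt_one (lam i)).le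
      (blockStart lam i) 0
    rw [zero_add, Set.inter_comm] at volume_extra
    simp only [extra_iff]
    rw [natCast_floor_eq_intCast_floor (hlam i), Int.self_sub_floor]
    exact volume_extra
end
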